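/- arXiv:1906.03429 — 2 statements merged into one kernel-verified Lean document; each statement's English description precedes it below -/
import Mathlib

section
/- Let n ≥ 1, let θ, τ be permutations of {1,…,n}, let a, b ∈ ℂ, let G be a subgroup of S_n, and let χ : G → ℂ be any function (in particular, any character of G). Then d_χ^G(aP_θ + bP_τ) = (a+b)^F · Σ_{σ ∈ X(θ,τ) ∩ G} χ(σ⁻¹) · a^{n − t_σ − F} · b^{t_σ}, where t_σ = n − |Fix(θ⁻¹σ)| and F = |Fix(θ⁻¹τ)|. -/
open Finset

/-- The permutation matrix of `θ`: `(P_θ)_{i,j} = 1` if `i = θ(j)`, else `0`. -/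
noncomputable def permMat {n : ℕ} (θ : Equiv.Perm (Fin n)) : Matrix (Fin n) (Fin n) ℂ :=
  Matrix.of fun i j => if i = θ j then 1 else 0

/-!
Substituting `σ⁻¹` for `σ` and reindexing turns the diagonal product of `aP_θ + bP_τ` into
`∏ j, ([σ j = θ j] a + [σ j = τ j] b)`. It vanishes unless `σ` agrees with `θ` or with `τ` at every
point. Otherwise each `j` contributes `a + b` where `θ` and `τ` agree, `a` where `σ` agrees with `θ`
only, and `b` where `σ` differs from `θ`.
-/

section Selections

variable {ι α R : Type*} [DecidableEq α]

theorem ite_add_ite_eq_ite [AddZeroClass R] {x y z : α} (h : z = x ∨ z = y) (a b : R) :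
    (if z = x then a else 0) + (if z = y then b else 0) =
      if x = y then a + b else if z = x then a else b := by
  grind [zero_add, add_zero]

variable [Fintype ι] {f g u : ι → α}

theorem card_filter_eq_and_ne (h : ∀ i, u i = f i ∨ u i = g i) :
    #{i | f i ≠ g i ∧ u i = f i} = #{i | u i = f i} - #{i | f i = g i} := by
  classical
  have hsub : univ.filter (fun i => f i = g i) ⊆ univ.filter fun i => u i = f i :=
    monotone_filter_right _ fun i _ hfg => (h i).elim id (·.trans hfg.symm)
  rw [← card_sdiff_of_subset hsub]
  congr 1
  ext i
  simp [and_comm]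

theorem card_filter_ne_and_ne (h : ∀ i, u i = f i ∨ u i = g i) :
    #{i | f i ≠ g i ∧ u i ≠ f i} = #{i | u i ≠ f i} :=
  congrArg card <| filter_congr fun i _ =>
    and_iff_right_of_imp fun huf hfg => huf ((h i).elim id (·.trans hfg.symm))

theorem prod_ite_add_ite_eq_pow [CommSemiring R] (h : ∀ i, u i = f i ∨ u i = g i) (a b : R) :
    ∏ i, ((if u i = f i then a else 0) + (if u i = g i then b else 0)) =
      (a + b) ^ #{i | f i = g i} *
        (a ^ (#{i | u i = f i} - #{i | f i = g i}) * b ^ #{i | u i ≠ f i}) := by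
  simp only [ite_add_ite_eq_ite (h _), prod_ite, prod_const, filter_filter]
  rw [← card_filter_eq_and_ne h, ← card_filter_ne_and_ne h]

theorem prod_ite_add_ite_eq_zero [CommSemiring R] (h : ¬ ∀ i, u i = f i ∨ u i = g i) (a b : R) :
    ∏ i, ((if u i = f i then a else 0) + (if u i = g i then b else 0)) = 0 := by
  obtain ⟨i, hi⟩ := not_forall.mp h
  obtain ⟨hf, hg⟩ := not_or.mp hi
  exact prod_eq_zero (mem_univ i) (by rw [if_neg hf, if_neg hg, add_zero])

end Selections

section Permutations

variable {ι : Type*}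

theorem inv_mul_apply_eq_self_iff (θ σ : Equiv.Perm ι) (i : ι) :
    (θ⁻¹ * σ) i = i ↔ σ i = θ i := by
  rw [Equiv.Perm.mul_apply, Equiv.Perm.inv_eq_iff_eq]

-- The ones of `θ.permMatrix R` are at the positions `(i, θ i)`: the transpose of `P_θ`.
theorem permMatrix_inv_apply {R : Type*} [Zero R] [One R] [DecidableEq ι] (θ : Equiv.Perm ι)
    (i j : ι) : (θ⁻¹).permMatrix R i j = if i = θ j then 1 else 0 := by
  simp only [Equiv.Perm.permMatrix, PEquiv.toMatrix_apply, Equiv.toPEquiv_apply, Option.mem_def,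
    Option.some.injEq, Equiv.Perm.inv_eq_iff_eq]

end Permutations

section GenMatrixFn

variable {ι R : Type*} [Fintype ι] [CommSemiring R]

/-- The generalized matrix function `d_χ^G(A)`, for an arbitrary weight `χ` on `G`. -/
def genMatrixFn (G : Subgroup (Equiv.Perm ι)) [Fintype G] (χ : G → R) (A : Matrix ι ι R) : R :=
  ∑ σ : G, χ σ * ∏ i, A i ((σ : Equiv.Perm ι) i)

theorem genMatrixFn_eq_sum_inv (G : Subgroup (Equiv.Perm ι)) [Fintype G] (χ : G → R)
    (A : Matrix ι ι R) :
    genMatrixFn G χ A = ∑ σ : G, χ σ⁻¹ * ∏ j, A ((σ : Equiv.Perm ι) j) j := by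
  rw [genMatrixFn, ← Equiv.sum_comp (Equiv.inv G)]
  refine sum_congr rfl fun σ _ => ?_
  rw [← Equiv.prod_comp (σ : Equiv.Perm ι)]
  simp

variable [DecidableEq ι]

/-- The set `X(θ, τ)` of permutations that agree with `θ` or with `τ` at every point. -/
def mixedPerms (θ τ : Equiv.Perm ι) : Finset (Equiv.Perm ι) :=
  {σ | ∀ i, σ i = θ i ∨ σ i = τ i}

theorem mem_mixedPerms {θ τ σ : Equiv.Perm ι} :
    σ ∈ mixedPerms θ τ ↔ ∀ i, σ i = θ i ∨ σ i = τ i := by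
  simp [mixedPerms]

theorem prod_smul_permMatrix_add_smul_permMatrix (θ τ σ : Equiv.Perm ι) (a b : R) :
    ∏ j, (a • (θ⁻¹).permMatrix R + b • (τ⁻¹).permMatrix R) (σ j) j =
      if σ ∈ mixedPerms θ τ then
        (a + b) ^ #{i | (θ⁻¹ * τ) i = i} *
          (a ^ (#{i | (θ⁻¹ * σ) i = i} - #{i | (θ⁻¹ * τ) i = i}) *
            b ^ (Fintype.card ι - #{i | (θ⁻¹ * σ) i = i}))
      else 0 := by
  have hentry (j : ι) : (a • (θ⁻¹).permMatrix R + b • (τ⁻¹).permMatrix R) (σ j) j =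
      (if σ j = θ j then a else 0) + (if σ j = τ j then b else 0) := by
    simp only [Matrix.add_apply, Matrix.smul_apply, permMatrix_inv_apply, smul_eq_mul, mul_ite,
      mul_one, mul_zero]
  have hcompl : Fintype.card ι - #{i | σ i = θ i} = #{i | σ i ≠ θ i} := by
    rw [← card_compl, compl_filter]
  have hagree : #{i | τ i = θ i} = #{i | θ i = τ i} := by
    simp only [eq_comm]
  simp only [hentry, inv_mul_apply_eq_self_iff, hcompl, hagree]
  split_ifs with h
  · exact prod_ite_add_ite_eq_pow (mem_mixedPerms.mp h) a b
  · exact prod_ite_add_ite_eq_zero (mem_mixedPerms.not.mp h) a b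

theorem genMatrixFn_stmt4_general (θ τ : Equiv.Perm ι) (a b : R) (G : Subgroup (Equiv.Perm ι))
    [Fintype G] (χ : G → R) :
    genMatrixFn G χ (a • (θ⁻¹).permMatrix R + b • (τ⁻¹).permMatrix R) =
      (a + b) ^ #{i | (θ⁻¹ * τ) i = i} *
        ∑ σ : G with ↑σ ∈ mixedPerms θ τ,
          χ σ⁻¹ *
            a ^ (Fintype.card ι - (Fintype.card ι - #{i | (θ⁻¹ * (σ : Equiv.Perm ι)) i = i}) -
              #{i | (θ⁻¹ * τ) i = i}) *
            b ^ (Fintype.card ι - #{i | (θ⁻¹ * (σ : Equiv.Perm ι)) i = i}) := by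
  rw [genMatrixFn_eq_sum_inv, mul_sum, sum_filter]
  refine sum_congr rfl fun σ _ => ?_
  rw [prod_smul_permMatrix_add_smul_permMatrix, mul_ite, mul_zero,
    Nat.sub_sub_self (card_le_univ _)]
  congr 1
  ring

end GenMatrixFn

theorem permMat_eq_permMatrix_inv {n : ℕ} (θ : Equiv.Perm (Fin n)) :
    permMat θ = (θ⁻¹).permMatrix ℂ := by
  ext i j
  rw [permMatrix_inv_apply, permMat, Matrix.of_apply]

/-- For any subgroup `G` of `S_n` and any function `χ : G → ℂ`,
`d_χ^G(aP_θ + bP_τ) = (a+b)^F · Σ_{σ ∈ X(θ,τ) ∩ G} χ(σ⁻¹) a^{n − t_σ − F} b^{t_σ}`,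
where `t_σ = n − |Fix(θ⁻¹σ)|` and `F = |Fix(θ⁻¹τ)|`. -/
theorem genMatrixFn_stmt4 (n : ℕ) (hn : 1 ≤ n) (θ τ : Equiv.Perm (Fin n)) (a b : ℂ)
    (G : Subgroup (Equiv.Perm (Fin n))) [Fintype G] (χ : G → ℂ) (F : ℕ)
    (hF : F = (Finset.univ.filter fun i => (θ⁻¹ * τ) i = i).card) :
    ∑ σ : G, χ σ * ∏ i, (a • permMat θ + b • permMat τ) i ((σ : Equiv.Perm (Fin n)) i) =
      (a + b) ^ F *
        ∑ σ ∈ Finset.univ.filter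
            (fun σ : G => ∀ i, (σ : Equiv.Perm (Fin n)) i = θ i ∨
              (σ : Equiv.Perm (Fin n)) i = τ i),
          χ σ⁻¹ *
            a ^ (n - (n - (Finset.univ.filter fun i =>
                  (θ⁻¹ * (σ : Equiv.Perm (Fin n))) i = i).card) - F) *
            b ^ (n - (Finset.univ.filter fun i =>
                  (θ⁻¹ * (σ : Equiv.Perm (Fin n))) i = i).card) := by
  simpa only [genMatrixFn, mem_mixedPerms, ← permMat_eq_permMatrix_inv, Fintype.card_fin, ← hF]
    using genMatrixFn_stmt4_general θ τ a b G χ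
end

section
/- Let n ≥ 1, let θ, τ be permutations of {1,…,n}, and let a, b ∈ ℂ. Suppose θ⁻¹τ = C₁⋯C_r is the disjoint cycle expression of θ⁻¹τ, where C_i is a cycle of length l_i ≥ 2, and let F = |Fix(θ⁻¹τ)|. Then per(aP_θ + bP_τ) = (a+b)^F · Σ_{I ⊆ {1,…,r}} a^{n − Σ_{i∈I} l_i − F} · b^{Σ_{i∈I} l_i}. -/
open Finset

/-- The permanent of an `n × n` complex matrix. -/
noncomputable def perm' {n : ℕ} (A : Matrix (Fin n) (Fin n) ℂ) : ℂ :=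
  ∑ σ : Equiv.Perm (Fin n), ∏ i, A i (σ i)

/-!
Multiplying by `P_θ⁻¹` reduces the claim to the pencil `a • 1 + b • P_π` with `π = θ⁻¹τ`. A
permutation `σ` contributes to its permanent only if `σ x ∈ {x, π x}` for every `x`. Then each cycle
of `σ` agrees with `π` on its support, hence is a cycle of `π`, so the contributing permutations
correspond to the subsets of the cycles of `π`. A cycle of length `l` contributes the factor `b ^ l`
if it is chosen and `a ^ l` otherwise, and a fixed point of `π` always contributes `a + b`; hence
the permanent is `(a + b) ^ F * ∏ (b ^ l + a ^ l)`.
-/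

section CycleFactors

open Equiv Equiv.Perm

lemma injective_of_isCycle_of_disjoint {α ι : Type*} {C : ι → Perm α}
    (hcyc : ∀ i, (C i).IsCycle) (hdisj : ∀ i j, i ≠ j → (C i).Disjoint (C j)) :
    Function.Injective C := by
  intro i j hij
  by_contra hne
  exact (hcyc i).ne_one (disjoint_refl_iff.1 (hij ▸ hdisj i j hne))

variable {α : Type*} [Fintype α] [DecidableEq α] {σ π : Perm α}

lemma cycleFactorsFinset_subset_cycleFactorsFinset_iff :
    σ.cycleFactorsFinset ⊆ π.cycleFactorsFinset ↔ ∀ x, σ x = x ∨ σ x = π x := by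
  constructor
  · intro hσπ x
    by_cases hx : x ∈ σ.support
    · obtain ⟨c, hcσ, hxc⟩ := mem_support_iff_mem_support_of_mem_cycleFactorsFinset.1 hx
      have hσ : c x = σ x := (mem_cycleFactorsFinset_iff.1 hcσ).2 x hxc
      have hπ : c x = π x := (mem_cycleFactorsFinset_iff.1 (hσπ hcσ)).2 x hxc
      exact Or.inr (hσ.symm.trans hπ)
    · exact Or.inl (notMem_support.1 hx)
  · intro hσπ c hc
    obtain ⟨hcycle, hcσ⟩ := mem_cycleFactorsFinset_iff.1 hc
    refine mem_cycleFactorsFinset_iff.2 ⟨hcycle, fun x hx => ?_⟩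
    have hσx : σ x ≠ x := by rw [← hcσ x hx]; exact mem_support.1 hx
    exact (hcσ x hx).trans ((hσπ x).resolve_left hσx)

lemma exists_cycleFactorsFinset_eq_of_subset {s : Finset (Perm α)}
    (hs : s ⊆ π.cycleFactorsFinset) : ∃ σ : Perm α, σ.cycleFactorsFinset = s := by
  have hdisj : (s : Set (Perm α)).Pairwise Perm.Disjoint :=
    (cycleFactorsFinset_pairwise_disjoint π).mono (coe_subset.2 hs)
  exact ⟨_, cycleFactorsFinset_eq_finset.2
    ⟨fun c hc => (mem_cycleFactorsFinset_iff.1 (hs hc)).1, hdisj, rfl⟩⟩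

lemma sum_filter_cycleFactorsFinset_subset {M : Type*} [AddCommMonoid M]
    (f : Finset (Perm α) → M) (π : Perm α) :
    ∑ σ : Perm α with σ.cycleFactorsFinset ⊆ π.cycleFactorsFinset, f σ.cycleFactorsFinset =
      ∑ s ∈ π.cycleFactorsFinset.powerset, f s := by
  refine sum_nbij cycleFactorsFinset (fun σ hσ => by simpa using hσ)
    cycleFactorsFinset_injective.injOn (fun s hs => ?_) (fun _ _ => rfl)
  obtain ⟨σ, rfl⟩ := exists_cycleFactorsFinset_eq_of_subset (mem_powerset.1 hs)
  exact ⟨σ, by simpa using hs, rfl⟩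

lemma support_eq_biUnion_cycleFactorsFinset (π : Perm α) :
    π.support = π.cycleFactorsFinset.biUnion support := by
  ext x
  rw [mem_biUnion, mem_support_iff_mem_support_of_mem_cycleFactorsFinset]

lemma prod_support_eq_prod_cycleFactorsFinset {M : Type*} [CommMonoid M] (π : Perm α) (f : α → M) :
    ∏ x ∈ π.support, f x = ∏ c ∈ π.cycleFactorsFinset, ∏ x ∈ c.support, f x := by
  rw [support_eq_biUnion_cycleFactorsFinset, prod_biUnion]
  exact fun c hc d hd hcd => (cycleFactorsFinset_pairwise_disjoint π hc hd hcd).disjoint_support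

lemma apply_eq_self_of_mem_support_of_notMem_cycleFactorsFinset {c : Perm α} {x : α}
    (hσπ : σ.cycleFactorsFinset ⊆ π.cycleFactorsFinset) (hcπ : c ∈ π.cycleFactorsFinset)
    (hcσ : c ∉ σ.cycleFactorsFinset) (hx : x ∈ c.support) : σ x = x := by
  by_contra hσx
  obtain ⟨d, hdσ, hxd⟩ :=
    mem_support_iff_mem_support_of_mem_cycleFactorsFinset.1 (mem_support.2 hσx)
  have hcd : c = d := (cycle_is_cycleOf hx hcπ).trans (cycle_is_cycleOf hxd (hσπ hdσ)).symm
  exact hcσ (hcd ▸ hdσ)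

lemma cycleFactorsFinset_noncommProd_eq_map {ι : Type*} [Fintype ι] {C : ι → Perm α}
    (hcyc : ∀ i, (C i).IsCycle) (hdisj : ∀ i j, i ≠ j → (C i).Disjoint (C j)) :
    (univ.noncommProd C fun i _ j _ hij => (hdisj i j hij).commute).cycleFactorsFinset =
      univ.map ⟨C, injective_of_isCycle_of_disjoint hcyc hdisj⟩ := by
  refine cycleFactorsFinset_eq_finset.2 ⟨by simpa using hcyc, ?_, ?_⟩
  · rintro _ hc _ hd hcd
    obtain ⟨i, -, rfl⟩ := mem_map.1 hc
    obtain ⟨j, -, rfl⟩ := mem_map.1 hd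
    exact hdisj i j (ne_of_apply_ne C hcd)
  · simp [noncommProd]

lemma sum_card_support_add_card_fixedPoints (π : Perm α) :
    ∑ c ∈ π.cycleFactorsFinset, #c.support + #{x | π x = x} = Fintype.card α := by
  have hsum : ∑ c ∈ π.cycleFactorsFinset, #c.support = #π.support := sum_cycleType π
  have hfix : ({x | π x = x} : Finset α) = π.supportᶜ := by ext x; simp
  rw [hsum, hfix, card_add_card_compl]

end CycleFactors

section Permanent

open Equiv Equiv.Perm Matrix

variable {α R : Type*} [DecidableEq α] [CommSemiring R]

/-- The matrix pencil `a I + b P_π` of a permutation `π`, in Mathlib's convention that the `(i, j)`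
entry of `P_π` is `1` when `π i = j`. -/
def permPencil (a b : R) (π : Perm α) : Matrix α α R :=
  a • 1 + b • π.permMatrix R

lemma permPencil_apply (a b : R) (π : Perm α) (x y : α) :
    permPencil a b π x y = (if x = y then a else 0) + if π x = y then b else 0 := by
  simp [permPencil, Matrix.one_apply, PEquiv.toMatrix_apply, eq_comm]

variable [Fintype α]

lemma permanent_permPencil_inv_mul (a b : R) (θ τ : Perm α) :
    (permPencil a b (θ⁻¹ * τ)).permanent =
      (a • θ.permMatrix R + b • τ.permMatrix R).permanent := by
  rw [← permanent_permute_rows θ (a • θ.permMatrix R + b • τ.permMatrix R)]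
  congr 1
  ext x y
  have hτ : (θ⁻¹ * τ) x = y ↔ θ y = τ x := by rw [mul_apply, inv_eq_iff_eq, eq_comm]
  simp only [permPencil_apply, hτ]
  simp [PEquiv.toMatrix_apply, eq_comm]

lemma prod_permPencil_eq_zero (a b : R) {σ π : Perm α}
    (hσπ : ¬ σ.cycleFactorsFinset ⊆ π.cycleFactorsFinset) :
    ∏ x, permPencil a b π x (σ x) = 0 := by
  rw [cycleFactorsFinset_subset_cycleFactorsFinset_iff] at hσπ
  push Not at hσπ
  obtain ⟨x, hσx, hπx⟩ := hσπ
  refine prod_eq_zero (mem_univ x) ?_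
  rw [permPencil_apply, if_neg hσx.symm, if_neg hπx.symm, add_zero]

lemma prod_permPencil_of_cycleFactorsFinset_subset (a b : R) {σ π : Perm α}
    (hσπ : σ.cycleFactorsFinset ⊆ π.cycleFactorsFinset) :
    ∏ x, permPencil a b π x (σ x) = (a + b) ^ #{x | π x = x} *
      ((∏ c ∈ σ.cycleFactorsFinset, b ^ #c.support) *
        ∏ c ∈ π.cycleFactorsFinset \ σ.cycleFactorsFinset, a ^ #c.support) := by
  have hfix : ∏ x with π x = x, permPencil a b π x (σ x) = (a + b) ^ #{x | π x = x} := by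
    refine prod_eq_pow_card fun x hx => ?_
    have hπx : π x = x := (mem_filter.1 hx).2
    have hσx : σ x = x := by
      simpa [hπx] using cycleFactorsFinset_subset_cycleFactorsFinset_iff.1 hσπ x
    rw [permPencil_apply, if_pos hσx.symm, if_pos (hπx.trans hσx.symm)]
  have hchosen : ∀ c ∈ σ.cycleFactorsFinset,
      ∏ x ∈ c.support, permPencil a b π x (σ x) = b ^ #c.support := by
    refine fun c hc => prod_eq_pow_card fun x hx => ?_
    have hσx : c x = σ x := (mem_cycleFactorsFinset_iff.1 hc).2 x hx
    have hπx : c x = π x := (mem_cycleFactorsFinset_iff.1 (hσπ hc)).2 x hx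
    have hcx : c x ≠ x := mem_support.1 hx
    rw [permPencil_apply, ← hσx, ← hπx, if_neg hcx.symm, if_pos rfl, zero_add]
  have hunchosen : ∀ c ∈ π.cycleFactorsFinset \ σ.cycleFactorsFinset,
      ∏ x ∈ c.support, permPencil a b π x (σ x) = a ^ #c.support := by
    refine fun c hc => prod_eq_pow_card fun x hx => ?_
    obtain ⟨hcπ, hcσ⟩ := mem_sdiff.1 hc
    have hσx : σ x = x :=
      apply_eq_self_of_mem_support_of_notMem_cycleFactorsFinset hσπ hcπ hcσ hx
    have hπx : π x ≠ x := mem_support.1 (mem_cycleFactorsFinset_support_le hcπ hx)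
    rw [permPencil_apply, hσx, if_pos rfl, if_neg hπx, add_zero]
  have hsupport : ({x | ¬ π x = x} : Finset α) = π.support := by ext x; simp
  rw [← prod_filter_mul_prod_filter_not univ (fun x => π x = x), hfix, hsupport,
    prod_support_eq_prod_cycleFactorsFinset, ← prod_sdiff hσπ, prod_congr rfl hchosen,
    prod_congr rfl hunchosen, mul_comm (∏ c ∈ σ.cycleFactorsFinset, _)]

theorem permanent_permPencil (a b : R) (π : Perm α) :
    (permPencil a b π).permanent =
      (a + b) ^ #{x | π x = x} * ∏ c ∈ π.cycleFactorsFinset, (b ^ #c.support + a ^ #c.support) := by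
  calc (permPencil a b π).permanent
      = ∑ σ : Perm α, ∏ x, permPencil a b π x (σ x) := (permanent_transpose _).symm
    _ = ∑ σ : Perm α with σ.cycleFactorsFinset ⊆ π.cycleFactorsFinset,
          ∏ x, permPencil a b π x (σ x) :=
        (sum_filter_of_ne fun σ _ => not_imp_comm.1 (prod_permPencil_eq_zero a b)).symm
    _ = ∑ σ : Perm α with σ.cycleFactorsFinset ⊆ π.cycleFactorsFinset,
          (a + b) ^ #{x | π x = x} * ((∏ c ∈ σ.cycleFactorsFinset, b ^ #c.support) *
            ∏ c ∈ π.cycleFactorsFinset \ σ.cycleFactorsFinset, a ^ #c.support) :=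
        sum_congr rfl fun σ hσ =>
          prod_permPencil_of_cycleFactorsFinset_subset a b (mem_filter.1 hσ).2
    _ = ∑ s ∈ π.cycleFactorsFinset.powerset,
          (a + b) ^ #{x | π x = x} * ((∏ c ∈ s, b ^ #c.support) *
            ∏ c ∈ π.cycleFactorsFinset \ s, a ^ #c.support) :=
        sum_filter_cycleFactorsFinset_subset (fun s => (a + b) ^ #{x | π x = x} *
          ((∏ c ∈ s, b ^ #c.support) * ∏ c ∈ π.cycleFactorsFinset \ s, a ^ #c.support)) π
    _ = (a + b) ^ #{x | π x = x} *
          ∏ c ∈ π.cycleFactorsFinset, (b ^ #c.support + a ^ #c.support) := by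
        rw [← mul_sum, ← prod_add]

theorem genMatrixFn_stmt6_general {ι : Type*} [Fintype ι] (θ τ : Perm α) (a b : R)
    (C : ι → Perm α) (l : ι → ℕ) (hcyc : ∀ i, (C i).IsCycle) (hl : ∀ i, #(C i).support = l i)
    (hdisj : ∀ i j, i ≠ j → (C i).Disjoint (C j))
    (hprod : (univ.noncommProd C fun i _ j _ hij => (hdisj i j hij).commute) = θ⁻¹ * τ)
    (F : ℕ) (hF : F = #{x | (θ⁻¹ * τ) x = x}) :
    (a • θ.permMatrix R + b • τ.permMatrix R).permanent =
      (a + b) ^ F *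
        ∑ I : Finset ι, a ^ (Fintype.card α - (∑ i ∈ I, l i) - F) * b ^ (∑ i ∈ I, l i) := by
  classical
  have hfactors := cycleFactorsFinset_noncommProd_eq_map hcyc hdisj
  rw [hprod] at hfactors
  have hcard : ∑ i, l i + F = Fintype.card α := by
    simpa only [hfactors, sum_map, Function.Embedding.coeFn_mk, hl, ← hF] using
      sum_card_support_add_card_fixedPoints (θ⁻¹ * τ)
  have hunchosen (I : Finset ι) :
      ∑ i ∈ Iᶜ, l i = Fintype.card α - (∑ i ∈ I, l i) - F := by
    have := sum_add_sum_compl I l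
    omega
  rw [← permanent_permPencil_inv_mul, permanent_permPencil, ← hF, hfactors, prod_map]
  simp only [Function.Embedding.coeFn_mk, hl, Fintype.prod_add, prod_pow_eq_pow_sum, hunchosen,
    mul_comm]

end Permanent

lemma perm'_eq_permanent_transpose {n : ℕ} (A : Matrix (Fin n) (Fin n) ℂ) :
    perm' A = A.transpose.permanent :=
  rfl

lemma transpose_permMat {n : ℕ} (θ : Equiv.Perm (Fin n)) :
    (permMat θ).transpose = θ.permMatrix ℂ := by
  ext i j
  simp [permMat, PEquiv.toMatrix_apply, eq_comm]

/-- If `θ⁻¹τ = C₁⋯C_r` is the disjoint cycle expression with `C_i` of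
length `l_i ≥ 2` and `F = |Fix(θ⁻¹τ)|`, then
`per(aP_θ + bP_τ) = (a+b)^F · Σ_{I ⊆ [r]} a^{n−Σ_{i∈I}l_i−F} b^{Σ_{i∈I}l_i}`. -/
theorem genMatrixFn_stmt6 (n r : ℕ) (hn : 1 ≤ n) (θ τ : Equiv.Perm (Fin n)) (a b : ℂ)
    (C : Fin r → Equiv.Perm (Fin n)) (l : Fin r → ℕ)
    (hcyc : ∀ i, (C i).IsCycle)
    (hl : ∀ i, (C i).support.card = l i)
    (hl2 : ∀ i, 2 ≤ l i)
    (hdisj : ∀ i j, i ≠ j → (C i).Disjoint (C j))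
    (hprod : (Finset.univ.noncommProd C
      (fun i _ j _ hij => (hdisj i j hij).commute)) = θ⁻¹ * τ)
    (F : ℕ) (hF : F = (Finset.univ.filter fun i => (θ⁻¹ * τ) i = i).card) :
    perm' (a • permMat θ + b • permMat τ) =
      (a + b) ^ F *
        ∑ I : Finset (Fin r),
          a ^ (n - (∑ i ∈ I, l i) - F) * b ^ (∑ i ∈ I, l i) := by
  rw [perm'_eq_permanent_transpose, Matrix.transpose_add, Matrix.transpose_smul,
    Matrix.transpose_smul, transpose_permMat, transpose_permMat]
  simpa only [Fintype.card_fin] using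
    genMatrixFn_stmt6_general θ τ a b C l hcyc hl hdisj hprod F hF
end
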